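/- arXiv:2310.20143 — 4 statements merged into one kernel-verified Lean document; each statement's English description precedes it below -/
import Mathlib

section
/- For all real numbers ξ₁ and ξ₂, the function y ↦ sgn(y)·(e^{iξ₁y} − 1)(e^{iξ₂y} − 1)/y² is Lebesgue integrable on ℝ, and its integral equals 2i·(ξ₁ log|ξ₁| + ξ₂ log|ξ₂| − (ξ₁+ξ₂) log|ξ₁+ξ₂|), with the convention that ξ log|ξ| = 0 at ξ = 0. In other words, the symbol Ω(ξ₁,ξ₂) of the bilinear form Ω satisfies the resonance identity Ω(ξ₁,ξ₂) = ω(ξ₁) + ω(ξ₂) − ω(ξ₁+ξ₂) where ω(ξ) = 2iξ log|ξ|. -/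
/-!
Adding the integrand at `y` and at `-y` leaves, on the half-line `y > 0`, the integrand
`2i (sin ((ξ₁ + ξ₂) y) - sin (ξ₁ y) - sin (ξ₂ y)) / y²`. With `sin (c y) = c y sinc (c y)` this is
`2i (ξ₁ (sinc (c y) - sinc (ξ₁ y)) / y + ξ₂ (sinc (c y) - sinc (ξ₂ y)) / y)` for `c = ξ₁ + ξ₂`.
Each of the two quotients is a Frullani integrand for the even function `sinc`, which
tends to `1` at `0` and to `0` at infinity, so its integral is `log |ξⱼ| - log |c|`
(`integral_sinc_frullani`). The degenerate cases `ξ₁ = 0`, `ξ₂ = 0` and `c = 0`, in which Frullani's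
formula does not apply, have vanishing (symmetrized) integrand.
-/

open MeasureTheory Filter Topology Set

/-- The integrability criterion used for all integrands below: boundedness together with
`O(y⁻²)` decay, stated as two global bounds. -/
lemma integrable_of_bound_of_decay {E : Type*} [NormedAddCommGroup E] {f : ℝ → E} {μ : Measure ℝ}
    (hμ : μ ≤ volume)
    (hf : AEStronglyMeasurable f μ) {A B : ℝ} (hA : ∀ y, ‖f y‖ ≤ A)
    (hB : ∀ y, y ^ 2 * ‖f y‖ ≤ B) : Integrable f μ := by
  refine ((integrable_inv_one_add_sq.const_mul (A + B)).mono_measure hμ).mono' hf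
    (Eventually.of_forall fun y => ?_)
  rw [← div_eq_mul_inv, le_div_iff₀ (by positivity)]
  linarith [hA y, hB y]

/-- Second-order flatness of `sinc` at `0`, which makes the Frullani integrand bounded there; the
constant is not sharp. -/
lemma abs_one_sub_sinc_le (x : ℝ) : |1 - Real.sinc x| ≤ 2 * x ^ 2 := by
  wlog hx : 0 ≤ x generalizing x
  · simpa using this (-x) (by linarith)
  rcases hx.eq_or_lt with rfl | hx
  · simp
  rw [abs_of_nonneg (by linarith [Real.sinc_le_one x]), Real.sinc_of_ne_zero hx.ne']
  have h := Real.sin_gt_sub_cube hx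
  have : 1 - x ^ 2 / 6 ≤ Real.sin x / x := by
    rw [le_div_iff₀ hx]; nlinarith
  nlinarith

lemma abs_mul_sinc_le (x : ℝ) : |x * Real.sinc x| ≤ 1 := by
  rcases eq_or_ne x 0 with rfl | h
  · simp
  · rw [Real.sinc_of_ne_zero h, mul_div_cancel₀ _ h]
    exact Real.abs_sin_le_one x

lemma integrableOn_sinc_frullani {a c : ℝ} (ha : a ≠ 0) (hc : c ≠ 0) :
    IntegrableOn (fun y : ℝ => y⁻¹ * (Real.sinc (c * y) - Real.sinc (a * y))) (Ioi 0) := by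
  have hdecay : ∀ y : ℝ, y ^ 2 * ‖y⁻¹ * (Real.sinc (c * y) - Real.sinc (a * y))‖
      ≤ |c|⁻¹ + |a|⁻¹ := by
    intro y
    rcases eq_or_ne y 0 with rfl | hy
    · simp; positivity
    have h1 := abs_mul_sinc_le (c * y)
    have h2 := abs_mul_sinc_le (a * y)
    have key : y ^ 2 * ‖y⁻¹ * (Real.sinc (c * y) - Real.sinc (a * y))‖
        = |c⁻¹ * (c * y * Real.sinc (c * y)) - a⁻¹ * (a * y * Real.sinc (a * y))| := by
      nth_rewrite 1 [← abs_of_nonneg (sq_nonneg y)]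
      rw [Real.norm_eq_abs, ← abs_mul]
      congr 1
      field_simp
    rw [key]
    refine (abs_sub _ _).trans ?_
    rw [abs_mul, abs_mul a⁻¹, abs_inv, abs_inv]
    have : 0 < |c|⁻¹ := by positivity
    have : 0 < |a|⁻¹ := by positivity
    nlinarith
  have hnear : ∀ y : ℝ, |y| ≤ 1 → ‖y⁻¹ * (Real.sinc (c * y) - Real.sinc (a * y))‖
      ≤ 2 * c ^ 2 + 2 * a ^ 2 := by
    intro y hy1
    rcases eq_or_ne y 0 with rfl | hy
    · simp; positivity
    have hy' : 0 < |y| := abs_pos.2 hy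
    rw [norm_mul, norm_inv, Real.norm_eq_abs, Real.norm_eq_abs, inv_mul_le_iff₀ hy']
    have h1 := abs_one_sub_sinc_le (c * y)
    have h2 := abs_one_sub_sinc_le (a * y)
    have h3 : y ^ 2 ≤ |y| := by rw [← sq_abs]; nlinarith
    have h4 : |Real.sinc (c * y) - Real.sinc (a * y)| ≤ (2 * c ^ 2 + 2 * a ^ 2) * y ^ 2 := by
      rw [abs_le] at *
      constructor <;> nlinarith
    have : 0 ≤ 2 * c ^ 2 + 2 * a ^ 2 := by positivity
    nlinarith
  refine integrable_of_bound_of_decay Measure.restrict_le_self ?_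
    (A := 2 * c ^ 2 + 2 * a ^ 2 + (|c|⁻¹ + |a|⁻¹)) (fun y => ?_) hdecay
  · have := Real.continuous_sinc.measurable
    exact Measurable.aestronglyMeasurable (by fun_prop)
  · have h0 : 0 ≤ |c|⁻¹ + |a|⁻¹ := by positivity
    have h1 : 0 ≤ 2 * c ^ 2 + 2 * a ^ 2 := by positivity
    rcases le_or_gt |y| 1 with h | h
    · linarith [hnear y h]
    · have h2 : 1 ≤ y ^ 2 := by rw [← sq_abs]; nlinarith
      nlinarith [hdecay y, norm_nonneg (y⁻¹ * (Real.sinc (c * y) - Real.sinc (a * y)))]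

lemma sinc_abs_mul (a y : ℝ) : Real.sinc (|a| * y) = Real.sinc (a * y) := by
  rcases abs_choice a with h | h <;> simp [h]

lemma integral_sinc_frullani {a c : ℝ} (ha : a ≠ 0) (hc : c ≠ 0) :
    ∫ y in Ioi (0 : ℝ), y⁻¹ * (Real.sinc (c * y) - Real.sinc (a * y))
      = Real.log |a| - Real.log |c| := by
  have hzero : Tendsto Real.sinc (𝓝[>] 0) (𝓝 1) := by
    have := Real.continuous_sinc.tendsto 0
    rw [Real.sinc_zero] at this
    exact this.mono_left nhdsWithin_le_nhds
  have htop : Tendsto Real.sinc atTop (𝓝 0) := by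
    refine squeeze_zero_norm' ?_ tendsto_inv_atTop_zero
    filter_upwards [eventually_gt_atTop 0] with x hx
    have := abs_mul_sinc_le x
    rw [abs_mul, abs_of_pos hx] at this
    rwa [Real.norm_eq_abs, ← one_div, le_div_iff₀' hx]
  have h := Frullani.integral_Ioi_eq (f := Real.sinc)
    (Real.continuous_sinc.locallyIntegrable.locallyIntegrableOn _)
    (abs_pos.2 hc) (abs_pos.2 ha) hzero htop
    (by simpa only [sinc_abs_mul, smul_eq_mul] using integrableOn_sinc_frullani ha hc)
  simpa only [sinc_abs_mul, smul_eq_mul, sub_zero, mul_one,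
    Real.log_div (abs_pos.2 ha).ne' (abs_pos.2 hc).ne'] using h

/-- The integrand of the symbol `Ω(a, b)`. -/
noncomputable def omegaIntegrand (a b y : ℝ) : ℂ :=
  (Real.sign y : ℂ) * (Complex.exp (Complex.I * a * y) - 1) *
    (Complex.exp (Complex.I * b * y) - 1) / (y : ℂ) ^ 2

lemma integrable_omegaIntegrand (a b : ℝ) : Integrable (omegaIntegrand a b) := by
  have hsign : ∀ y, ‖(Real.sign y : ℂ)‖ ≤ 1 := by
    intro y
    rcases Real.sign_apply_eq y with h | h | h <;> simp [h]
  have hlip : ∀ a y : ℝ, ‖Complex.exp (Complex.I * a * y) - 1‖ ≤ |a| * |y| := by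
    intro a y
    have := Real.norm_exp_I_mul_ofReal_sub_one_le (x := a * y)
    simpa [mul_assoc] using this
  have htwo : ∀ a y : ℝ, ‖Complex.exp (Complex.I * a * y) - 1‖ ≤ 2 := by
    intro a y
    have h1 : ‖Complex.exp (Complex.I * a * y)‖ = 1 := by
      have := Complex.norm_exp_I_mul_ofReal (a * y)
      simpa [mul_assoc] using this
    calc _ ≤ ‖Complex.exp (Complex.I * a * y)‖ + ‖(1 : ℂ)‖ := norm_sub_le _ _
      _ = 2 := by rw [h1]; norm_num
  have hnorm : ∀ y, ‖omegaIntegrand a b y‖ = ‖(Real.sign y : ℂ)‖ *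
      ‖Complex.exp (Complex.I * a * y) - 1‖ * ‖Complex.exp (Complex.I * b * y) - 1‖ / y ^ 2 := by
    intro y
    simp [omegaIntegrand]
  refine integrable_of_bound_of_decay le_rfl ?_ (A := |a| * |b|) (B := 1 * 2 * 2) ?_ ?_
  · have hs : Measurable Real.sign := by
      unfold Real.sign
      exact Measurable.ite measurableSet_Iio measurable_const
        (Measurable.ite measurableSet_Ioi measurable_const measurable_const)
    unfold omegaIntegrand
    exact Measurable.aestronglyMeasurable (by fun_prop)
  · intro y
    rw [hnorm]
    rcases eq_or_ne y 0 with rfl | hy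
    · simp; positivity
    rw [div_le_iff₀ (by positivity)]
    calc _ ≤ 1 * (|a| * |y|) * (|b| * |y|) := by
          gcongr
          exacts [hsign y, hlip a y, hlip b y]
      _ = |a| * |b| * y ^ 2 := by rw [← sq_abs y]; ring
  · intro y
    rw [hnorm]
    rcases eq_or_ne y 0 with rfl | hy
    · simp
    rw [mul_div_cancel₀ _ (by positivity)]
    gcongr
    exacts [hsign y, htwo a y, htwo b y]

lemma omegaIntegrand_add_neg (a b : ℝ) {y : ℝ} (hy : 0 < y) :
    omegaIntegrand a b y + omegaIntegrand a b (-y) = 2 * Complex.I *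
      ((Real.sin ((a + b) * y) - Real.sin (a * y) - Real.sin (b * y)) / y ^ 2 : ℝ) := by
  have h1 : Real.sign y = 1 := Real.sign_of_pos hy
  have h2 : Real.sign (-y) = -1 := Real.sign_of_neg (by linarith)
  have e : ∀ a : ℝ, Complex.exp (Complex.I * a * y)
      = Complex.cos (a * y) + Complex.sin (a * y) * Complex.I := by
    intro a
    rw [← Complex.exp_mul_I]; ring_nf
  have e' : ∀ a : ℝ, Complex.exp (Complex.I * a * (-y : ℂ))
      = Complex.cos (a * y) - Complex.sin (a * y) * Complex.I := by
    intro a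
    rw [show Complex.I * a * (-y : ℂ) = (-(a * y : ℂ)) * Complex.I by ring, Complex.exp_mul_I,
      Complex.cos_neg, Complex.sin_neg]
    ring
  have hy' : (y : ℂ) ≠ 0 := by exact_mod_cast hy.ne'
  unfold omegaIntegrand
  rw [h1, h2]
  push_cast
  rw [e, e, e', e', add_mul, Complex.sin_add]
  field_simp
  ring

/-- Folding the integral of `omegaIntegrand` onto the positive half-line. -/
lemma integral_omegaIntegrand (a b : ℝ) :
    ∫ y, omegaIntegrand a b y = 2 * Complex.I * (∫ y in Ioi (0 : ℝ),
      (Real.sin ((a + b) * y) - Real.sin (a * y) - Real.sin (b * y)) / y ^ 2 : ℝ) := by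
  have hi := integrable_omegaIntegrand a b
  have hneg : ∫ y in Iic (0 : ℝ), omegaIntegrand a b y
      = ∫ y in Ioi (0 : ℝ), omegaIntegrand a b (-y) := by
    rw [integral_comp_neg_Ioi, neg_zero]
  rw [← intervalIntegral.integral_Iic_add_Ioi hi.integrableOn hi.integrableOn (b := 0), hneg,
    add_comm, ← integral_add hi.integrableOn hi.comp_neg.integrableOn, ← integral_complex_ofReal,
    ← integral_const_mul]
  exact setIntegral_congr_fun measurableSet_Ioi fun y hy => omegaIntegrand_add_neg a b hy

lemma integral_sin_combination (a b : ℝ) :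
    ∫ y in Ioi (0 : ℝ), (Real.sin ((a + b) * y) - Real.sin (a * y) - Real.sin (b * y)) / y ^ 2
      = a * Real.log |a| + b * Real.log |b| - (a + b) * Real.log |a + b| := by
  rcases eq_or_ne a 0 with rfl | ha
  · simp
  rcases eq_or_ne b 0 with rfl | hb
  · simp
  rcases eq_or_ne (a + b) 0 with hc | hc
  · obtain rfl : b = -a := by linarith
    simp
  have hsin : ∀ t y : ℝ, Real.sin (t * y) = t * y * Real.sinc (t * y) := by
    intro t y
    rcases eq_or_ne (t * y) 0 with h | h
    · simp [h]
    · rw [Real.sinc_of_ne_zero h, mul_div_cancel₀ _ h]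
  have hpt : ∀ y ∈ Ioi (0 : ℝ),
      (Real.sin ((a + b) * y) - Real.sin (a * y) - Real.sin (b * y)) / y ^ 2
      = a * (y⁻¹ * (Real.sinc ((a + b) * y) - Real.sinc (a * y)))
        + b * (y⁻¹ * (Real.sinc ((a + b) * y) - Real.sinc (b * y))) := by
    intro y hy
    have hy0 : y ≠ 0 := (mem_Ioi.1 hy).ne'
    rw [hsin, hsin, hsin]
    field_simp
    ring
  rw [setIntegral_congr_fun measurableSet_Ioi hpt,
    integral_add ((integrableOn_sinc_frullani ha hc).const_mul a)
      ((integrableOn_sinc_frullani hb hc).const_mul b),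
    integral_const_mul, integral_const_mul, integral_sinc_frullani ha hc,
    integral_sinc_frullani hb hc]
  ring

/-- The resonance identity for the symbol of the bilinear form `Ω`:
`Ω(ξ₁,ξ₂) = ω(ξ₁) + ω(ξ₂) − ω(ξ₁+ξ₂)` with `ω(ξ) = 2iξ log|ξ|`. -/
theorem sqg_resonance_identity (ξ₁ ξ₂ : ℝ) :
    Integrable (fun y : ℝ =>
      (Real.sign y : ℂ) * (Complex.exp (Complex.I * ξ₁ * y) - 1) *
        (Complex.exp (Complex.I * ξ₂ * y) - 1) / (y : ℂ) ^ 2) volume ∧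
    (∫ y : ℝ,
      (Real.sign y : ℂ) * (Complex.exp (Complex.I * ξ₁ * y) - 1) *
        (Complex.exp (Complex.I * ξ₂ * y) - 1) / (y : ℂ) ^ 2)
      = 2 * Complex.I *
          ((ξ₁ : ℂ) * (Real.log |ξ₁| : ℝ) + (ξ₂ : ℂ) * (Real.log |ξ₂| : ℝ)
            - ((ξ₁ : ℂ) + (ξ₂ : ℂ)) * (Real.log |ξ₁ + ξ₂| : ℝ)) := by
  refine ⟨integrable_omegaIntegrand ξ₁ ξ₂, (integral_omegaIntegrand ξ₁ ξ₂).trans ?_⟩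
  rw [integral_sin_combination]
  push_cast
  rfl
end

section
/- For real-valued Schwartz functions f and g on ℝ and every x ∈ ℝ, the integral Ω(f,g)(x) = ∫_ℝ δ^y f(x) · |δ|^y g(x) dy converges absolutely, and the null-structure identity Ω(f,g)(x) = (A f)(x)·g(x) + f(x)·(A g)(x) − A(f·g)(x) holds pointwise. -/
/-!
For a Schwartz function `h`, the operator `A` has the singular-integral representation
`A h(x) = 2 c h'(x) - ∫_{y > 0} (h(x+y) - h(x-y) - 2 y h'(x) 1_{y ≤ 1}) / y² dy`
with a constant `c` independent of `h` and `x` (`integral_oddQuot`).  To see this, insert the Fourier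
inversion formula for `h` and `h'` and exchange the integrals; the inner integral becomes
`S(ξ) = ∫_{y > 0} (sin(yξ) - yξ 1_{y ≤ 1}) / y² dy`, which is odd in `ξ`, and the scaling
`t = yξ` gives `S(ξ) = ξ (S(1) - log |ξ|)` (`sinInt_eq`).  Thus `c = S(1)`, whose value is not needed.
The exchange is licensed by the bound `(4ξ² + 2) / (1 + y²)` on the kernel (`abs_sinKer_le`) and the
rapid decay of `ĥ`.

Folding the integral defining `Ω(f,g)(x)` onto `y > 0`, its integrand is the combination
`[fg] - g(x) [f] - f(x) [g]` of the integrands above: the terms `f(x) g(x)` cancel because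
`1 / (y |y|)` is odd, and the terms with the cutoff cancel by the Leibniz rule.  The Leibniz rule also
removes the terms with `c`, which leaves the null-structure identity.
-/

open MeasureTheory

/-- The Fourier transform `ĥ(ξ) = ∫ e^{-ixξ} h(x) dx`. -/
noncomputable def fourierInt (h : ℝ → ℂ) (ξ : ℝ) : ℂ :=
  ∫ x : ℝ, Complex.exp (-(Complex.I * x * ξ)) * h x

/-- The symbol `m(ξ) = 2iξ log|ξ|` of the operator `A = 2 log|D_x| ∂_x`. -/
noncomputable def symbA (ξ : ℝ) : ℂ := 2 * Complex.I * (ξ : ℂ) * (Real.log |ξ| : ℝ)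

/-- The Fourier multiplier operator `A = 2 log|D_x| ∂_x`,
`A h(x) = (2π)⁻¹ ∫ e^{ixξ} m(ξ) ĥ(ξ) dξ`. -/
noncomputable def opA (h : ℝ → ℂ) (x : ℝ) : ℂ :=
  (2 * Real.pi : ℝ)⁻¹ * ∫ ξ : ℝ, Complex.exp (Complex.I * x * ξ) * symbA ξ * fourierInt h ξ

open Set SchwartzMap

/-! ### The sine kernel and the symbol -/

lemma integrable_fun_sub {E : Type*} [NormedAddCommGroup E] {μ : Measure ℝ} {u v : ℝ → E}
    (hu : Integrable u μ) (hv : Integrable v μ) : Integrable (fun t => u t - v t) μ :=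
  hu.sub hv

/-- The kernel `(sin(yξ) - yξ 1_{|y| ≤ 1}) / y²`.  The cutoff removes the non-integrable `ξ / y`
behaviour at `y = 0`; at `y = 0` itself the kernel takes the junk value `0`. -/
noncomputable def sinKer (y ξ : ℝ) : ℝ :=
  (Real.sin (y * ξ) - y * ξ * (if |y| ≤ 1 then 1 else 0)) / y ^ 2

lemma measurable_sinKer : Measurable (Function.uncurry sinKer) := by
  have hs : MeasurableSet {p : ℝ × ℝ | |p.1| ≤ 1} :=
    measurableSet_le (by fun_prop) (by fun_prop)
  have : Measurable fun p : ℝ × ℝ => (if |p.1| ≤ 1 then (1 : ℝ) else 0) :=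
    Measurable.ite hs measurable_const measurable_const
  unfold Function.uncurry sinKer
  fun_prop

lemma abs_sub_sin_le_two_sq (t : ℝ) : |Real.sin t - t| ≤ 2 * t ^ 2 := by
  rcases le_total |t| 1 with h | h
  · have h1 := Real.abs_sub_sin_le t
    rw [abs_sub_comm] at h1
    have h2 : |t| ^ 3 ≤ |t| ^ 2 := pow_le_pow_of_le_one (abs_nonneg t) h (by norm_num)
    rw [sq_abs] at h2
    nlinarith [sq_nonneg t]
  · have h1 : |Real.sin t - t| ≤ |Real.sin t| + |t| := abs_sub _ _
    have h2 := Real.abs_sin_le_abs (x := t)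
    rw [← sq_abs]
    nlinarith

/-- The bound is a product of a function of `ξ` and an integrable function of `y`, so that it
dominates the kernel in the application of Fubini's theorem. -/
lemma abs_sinKer_le (y ξ : ℝ) : |sinKer y ξ| ≤ (4 * ξ ^ 2 + 2) * (1 + y ^ 2)⁻¹ := by
  unfold sinKer
  rcases eq_or_ne y 0 with rfl | hy
  · simp; positivity
  have hy2 : 0 < y ^ 2 := by positivity
  rw [abs_div, abs_of_pos hy2, ← div_eq_mul_inv, div_le_div_iff₀ hy2 (by positivity)]
  split_ifs with h
  · have h1 := abs_sub_sin_le_two_sq (y * ξ)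
    have h2 : y ^ 2 ≤ 1 := by rw [← sq_abs]; nlinarith [abs_nonneg y]
    have h3 : 0 ≤ (1 - y ^ 2) * (y ^ 2 * ξ ^ 2) :=
      mul_nonneg (by linarith) (by positivity)
    rw [mul_one]
    calc _ ≤ (2 * (y * ξ) ^ 2) * (1 + y ^ 2) := by gcongr
      _ ≤ _ := by nlinarith
  · have h1 := Real.abs_sin_le_one (y * ξ)
    have h2 : 1 ≤ y ^ 2 := by rw [← sq_abs]; nlinarith [abs_nonneg y]
    rw [mul_zero, sub_zero]
    calc _ ≤ 1 * (1 + y ^ 2) := by gcongr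
      _ ≤ _ := by nlinarith [mul_nonneg hy2.le (sq_nonneg ξ)]

lemma integrable_sinKer (ξ : ℝ) : Integrable fun y => sinKer y ξ := by
  refine (integrable_inv_one_add_sq.const_mul (4 * ξ ^ 2 + 2)).mono'
    (measurable_sinKer.comp (measurable_id.prodMk measurable_const)).aestronglyMeasurable ?_
  exact Filter.Eventually.of_forall fun y => abs_sinKer_le y ξ

/-- `S(ξ) = ∫_{y > 0} (sin(yξ) - yξ 1_{y ≤ 1}) / y² dy`. -/
noncomputable def sinInt (ξ : ℝ) : ℝ := ∫ y in Ioi (0 : ℝ), sinKer y ξ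

lemma sinInt_neg (ξ : ℝ) : sinInt (-ξ) = -sinInt ξ := by
  unfold sinInt
  rw [← integral_neg]
  congr 1 with y
  simp only [sinKer, mul_neg, Real.sin_neg]
  ring

lemma sinInt_of_pos {ξ : ℝ} (hξ : 0 < ξ) : sinInt ξ = ξ * (sinInt 1 - Real.log ξ) := by
  have hi : IntervalIntegrable (fun t : ℝ => t⁻¹) volume 1 ξ := by
    refine intervalIntegral.intervalIntegrable_inv (fun t ht => ?_) continuousOn_id
    have := (lt_min one_pos hξ).trans_le (mem_Icc.1 ht).1
    exact this.ne'
  have hlog : ∫ t in (1 : ℝ)..ξ, t⁻¹ = Real.log ξ := by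
    rw [integral_inv_of_pos one_pos hξ, div_one]
  have hsub : ∀ a b : ℝ, 0 < a → Ioc a b ⊆ Ioi 0 := fun a b ha t ht => ha.trans ht.1
  have i1 : Integrable ((Ioc 1 ξ).indicator fun t : ℝ => t⁻¹) (volume.restrict (Ioi 0)) :=
    ((integrable_indicator_iff measurableSet_Ioc).2 hi.1).integrableOn
  have i2 : Integrable ((Ioc ξ 1).indicator fun t : ℝ => t⁻¹) (volume.restrict (Ioi 0)) :=
    ((integrable_indicator_iff measurableSet_Ioc).2 hi.2).integrableOn
  -- Rescaling by `ξ` moves the cutoff from `1` to `ξ`; the two indicators account for the difference.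
  obtain ⟨Φ, hΦ⟩ : ∃ Φ : ℝ → ℝ, Φ = fun t => ξ ^ 2 * (sinKer t 1 -
      ((Ioc 1 ξ).indicator (fun t : ℝ => t⁻¹) t - (Ioc ξ 1).indicator (fun t : ℝ => t⁻¹) t)) :=
    ⟨_, rfl⟩
  have e : ∀ y ∈ Ioi (0 : ℝ), sinKer y ξ = Φ (ξ * y) := by
    intro y hy
    rw [hΦ]
    have hy : 0 < y := hy
    have hp : 0 < ξ * y := mul_pos hξ hy
    have hle : ξ * y ≤ ξ ↔ y ≤ 1 := by
      constructor <;> intro h <;> nlinarith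
    simp only [sinKer, indicator, mem_Ioc, abs_of_pos hy, abs_of_pos hp, hle, ← not_le, mul_one,
      mul_comm y ξ]
    by_cases h1 : y ≤ 1 <;> by_cases h2 : ξ * y ≤ 1 <;> simp [h1, h2] <;> field_simp <;> ring
  unfold sinInt
  rw [setIntegral_congr_fun measurableSet_Ioi e, integral_comp_mul_left_Ioi Φ _ hξ, mul_zero, hΦ,
    integral_const_mul, integral_sub (integrable_sinKer 1).integrableOn (integrable_fun_sub i1 i2),
    integral_sub i1 i2, setIntegral_indicator measurableSet_Ioc,
    setIntegral_indicator measurableSet_Ioc, inter_eq_right.2 (hsub _ _ one_pos),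
    inter_eq_right.2 (hsub _ _ hξ), ← hlog, intervalIntegral]
  simp only [smul_eq_mul]
  field_simp

/-- Modulo multiples of `ξ`, the function `2i S(ξ)` is the negative of the symbol of `A`. -/
lemma sinInt_eq (ξ : ℝ) : sinInt ξ = ξ * (sinInt 1 - Real.log |ξ|) := by
  rcases lt_trichotomy ξ 0 with h | rfl | h
  · have := sinInt_of_pos (neg_pos.2 h)
    rw [sinInt_neg] at this
    rw [abs_of_neg h]; linarith
  · simp [sinInt, sinKer]
  · rw [abs_of_pos h]; exact sinInt_of_pos h

/-! ### Fourier inversion for `fourierInt` -/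

open scoped FourierTransform

/-- The relation to Mathlib's Fourier transform, whose exponential is `e^{-2πi v w}`. -/
lemma fourierInt_eq (h : 𝓢(ℝ, ℂ)) (ξ : ℝ) :
    fourierInt h ξ = 𝓕 h (ξ / (2 * Real.pi)) := by
  rw [SchwartzMap.fourier_coe, Real.fourier_real_eq_integral_exp_smul, fourierInt]
  congr 1 with v
  rw [smul_eq_mul]
  congr 2
  have := Real.pi_pos.ne'
  have e : -2 * Real.pi * v * (ξ / (2 * Real.pi)) = -(v * ξ) := by field_simp
  rw [e]; push_cast; ring

lemma fourierInt_inversion (h : 𝓢(ℝ, ℂ)) (x : ℝ) :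
    h x = (2 * Real.pi : ℝ)⁻¹ * ∫ ξ : ℝ, Complex.exp (Complex.I * x * ξ) * fourierInt h ξ := by
  have h1 : h x = 𝓕⁻ (𝓕 h) x := by rw [FourierTransform.fourierInv_fourier_eq]
  have hpi := Real.pi_pos.ne'
  rw [h1, SchwartzMap.fourierInv_coe, Real.fourierInv_eq']
  have e : ∀ ξ : ℝ, Complex.exp (Complex.I * x * ξ) * fourierInt h ξ
      = (fun v : ℝ => Complex.exp (((2 * Real.pi * inner ℝ v x : ℝ) : ℂ) * Complex.I) • 𝓕 h v)
          (ξ / (2 * Real.pi)) := by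
    intro ξ
    have e1 : 2 * Real.pi * inner ℝ (ξ / (2 * Real.pi)) x = ξ * x := by
      simp; field_simp
    simp only [fourierInt_eq, smul_eq_mul, e1]
    congr 2
    push_cast; ring
  simp_rw [e]
  rw [Measure.integral_comp_div (fun v : ℝ =>
    Complex.exp (((2 * Real.pi * inner ℝ v x : ℝ) : ℂ) * Complex.I) • 𝓕 h v),
    abs_of_pos (by positivity), Complex.real_smul, ← mul_assoc, ← Complex.ofReal_mul,
    inv_mul_cancel₀ (by positivity), Complex.ofReal_one, one_mul]

lemma fourierInt_deriv (h : 𝓢(ℝ, ℂ)) (ξ : ℝ) :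
    fourierInt (derivCLM ℂ ℂ h) ξ = Complex.I * ξ * fourierInt h ξ := by
  have hd : ⇑(derivCLM ℂ ℂ h) = deriv h := by ext; simp
  rw [fourierInt_eq, fourierInt_eq, SchwartzMap.fourier_coe, SchwartzMap.fourier_coe, hd,
    Real.fourier_deriv h.integrable h.differentiable (hd ▸ (derivCLM ℂ ℂ h).integrable)]
  have := Complex.ofReal_ne_zero.2 Real.pi_pos.ne'
  simp only [smul_eq_mul]
  push_cast
  field_simp

lemma deriv_inversion (h : 𝓢(ℝ, ℂ)) (x : ℝ) :
    deriv h x = (2 * Real.pi : ℝ)⁻¹ *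
      ∫ ξ : ℝ, Complex.exp (Complex.I * x * ξ) * (Complex.I * ξ * fourierInt h ξ) := by
  rw [← SchwartzMap.derivCLM_apply ℂ, fourierInt_inversion]
  simp_rw [fourierInt_deriv]

lemma continuous_fourierInt (h : 𝓢(ℝ, ℂ)) : Continuous (fourierInt h) := by
  have : fourierInt h = fun ξ => 𝓕 h (ξ / (2 * Real.pi)) := funext (fourierInt_eq h)
  rw [this]
  exact (𝓕 h).continuous.comp (by fun_prop)

lemma integrable_pow_mul_fourierInt (h : 𝓢(ℝ, ℂ)) (k : ℕ) :
    Integrable fun ξ : ℝ => |ξ| ^ k * ‖fourierInt h ξ‖ := by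
  have hpi := Real.pi_pos
  have h1 := (((𝓕 h).integrable_pow_mul volume k).comp_div
    (show (2 * Real.pi) ≠ 0 by positivity)).const_mul ((2 * Real.pi) ^ k)
  refine h1.congr (Filter.Eventually.of_forall fun ξ => ?_)
  simp only [fourierInt_eq, Real.norm_eq_abs, abs_div, abs_of_pos (show 0 < 2 * Real.pi by positivity),
    div_pow]
  field_simp

/-! ### The singular-integral representation of `A` -/

lemma norm_cexp_I_mul_mul (x ξ : ℝ) : ‖Complex.exp (Complex.I * x * ξ)‖ = 1 := by
  rw [show Complex.I * x * ξ = ((x * ξ : ℝ) : ℂ) * Complex.I by push_cast; ring,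
    Complex.norm_exp_ofReal_mul_I]

lemma integrable_kernel (h : 𝓢(ℝ, ℂ)) (x : ℝ) :
    Integrable (Function.uncurry fun y ξ : ℝ =>
      Complex.exp (Complex.I * x * ξ) * fourierInt h ξ * (2 * Complex.I * (sinKer y ξ : ℂ)))
      ((volume.restrict (Ioi 0)).prod volume) := by
  have hG : Integrable fun ξ : ℝ => 2 * ((4 * ξ ^ 2 + 2) * ‖fourierInt h ξ‖) := by
    refine ((((integrable_pow_mul_fourierInt h 2).const_mul 4).add
      ((integrable_pow_mul_fourierInt h 0).const_mul 2)).const_mul 2).congr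
      (Filter.Eventually.of_forall fun ξ => ?_)
    simp; ring
  refine (integrable_inv_one_add_sq.integrableOn.mul_prod hG).mono' ?_
    (Filter.Eventually.of_forall fun p => ?_)
  · have h1 := (continuous_fourierInt h).measurable
    have h2 : Measurable fun p : ℝ × ℝ => sinKer p.1 p.2 := measurable_sinKer
    unfold Function.uncurry
    apply Measurable.aestronglyMeasurable
    fun_prop
  · have := abs_sinKer_le p.1 p.2
    simp only [Function.uncurry, norm_mul, norm_cexp_I_mul_mul, Complex.norm_real,
      Real.norm_eq_abs, Complex.norm_I, Complex.norm_ofNat]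
    calc _ ≤ 1 * ‖fourierInt h p.2‖ * (2 * 1 * ((4 * p.2 ^ 2 + 2) * (1 + p.1 ^ 2)⁻¹)) := by gcongr
      _ = _ := by ring

/-- The regularised odd difference quotient `(h(x+y) - h(x-y) - 2 y h'(x) 1_{|y| ≤ 1}) / y²`. -/
noncomputable def oddQuot (h : ℝ → ℂ) (x y : ℝ) : ℂ :=
  (h (x + y) - h (x - y) - 2 * y * deriv h x * (if |y| ≤ 1 then 1 else 0)) / y ^ 2

lemma integrable_exp_mul_fourierInt (h : 𝓢(ℝ, ℂ)) (x : ℝ) :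
    Integrable fun ξ : ℝ => Complex.exp (Complex.I * x * ξ) * fourierInt h ξ := by
  have h1 := (continuous_fourierInt h)
  refine (integrable_pow_mul_fourierInt h 0).mono'
    (Continuous.aestronglyMeasurable (by fun_prop)) (Filter.Eventually.of_forall fun ξ => ?_)
  simp [norm_cexp_I_mul_mul]

lemma integrable_exp_mul_deriv (h : 𝓢(ℝ, ℂ)) (x : ℝ) :
    Integrable fun ξ : ℝ =>
      Complex.exp (Complex.I * x * ξ) * (Complex.I * ξ * fourierInt h ξ) := by
  simpa only [fourierInt_deriv] using integrable_exp_mul_fourierInt (derivCLM ℂ ℂ h) x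

/-- Fourier inversion turns the regularised difference quotient into an integral of the sine kernel. -/
lemma oddQuot_eq (h : 𝓢(ℝ, ℂ)) (x y : ℝ) :
    oddQuot h x y = (2 * Real.pi : ℝ)⁻¹ * ∫ ξ : ℝ,
      Complex.exp (Complex.I * x * ξ) * fourierInt h ξ * (2 * Complex.I * (sinKer y ξ : ℂ)) := by
  have i1 := integrable_exp_mul_fourierInt h (x + y)
  have i2 := integrable_exp_mul_fourierInt h (x - y)
  have i3 := (integrable_exp_mul_deriv h x).const_mul (2 * y * (if |y| ≤ 1 then 1 else 0))
  rw [oddQuot, fourierInt_inversion h (x + y), fourierInt_inversion h (x - y), deriv_inversion h x]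
  have e : ∀ a b c d p : ℂ, (p * a - p * b - 2 * y * (p * c) * d) / y ^ 2
      = p * ((a - b - 2 * y * d * c) / y ^ 2) := by intros; ring
  rw [e, ← integral_const_mul, ← integral_sub i1 i2, ← integral_sub (integrable_fun_sub i1 i2) i3,
    ← integral_div]
  congr 2 with ξ
  have hs : (Real.sin (y * ξ) : ℂ) * (2 * Complex.I)
      = Complex.exp (Complex.I * y * ξ) - Complex.exp (-(Complex.I * y * ξ)) := by
    rw [Complex.ofReal_sin, Complex.sin]
    push_cast
    rw [show -((y : ℂ) * ξ) * Complex.I = -(Complex.I * y * ξ) by ring,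
      show ((y : ℂ) * ξ) * Complex.I = (Complex.I * y * ξ) by ring]
    linear_combination (-(Complex.exp (-(Complex.I * y * ξ)) - Complex.exp (Complex.I * y * ξ))) * -Complex.I_sq
  have e1 : Complex.exp (Complex.I * (x + y : ℝ) * ξ)
      = Complex.exp (Complex.I * x * ξ) * Complex.exp (Complex.I * y * ξ) := by
    rw [← Complex.exp_add]; push_cast; ring_nf
  have e2 : Complex.exp (Complex.I * (x - y : ℝ) * ξ)
      = Complex.exp (Complex.I * x * ξ) * Complex.exp (-(Complex.I * y * ξ)) := by
    rw [← Complex.exp_add]; push_cast; ring_nf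
  rw [e1, e2, sinKer]
  push_cast at hs
  split_ifs <;> push_cast <;>
    linear_combination (-Complex.exp (Complex.I * x * ξ) * fourierInt h ξ / y ^ 2) * hs

lemma integrableOn_oddQuot (h : 𝓢(ℝ, ℂ)) (x : ℝ) : IntegrableOn (oddQuot h x) (Ioi 0) := by
  have := ((integrable_kernel h x).integral_prod_left).const_mul (((2 * Real.pi : ℝ)⁻¹ : ℝ) : ℂ)
  refine Integrable.congr this (Filter.Eventually.of_forall fun y => ?_)
  simp only [oddQuot_eq, Function.uncurry]

/-- The singular-integral representation of `A`; the constant `sinInt 1` does not depend on `h`. -/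
lemma integral_oddQuot (h : 𝓢(ℝ, ℂ)) (x : ℝ) :
    ∫ y in Ioi (0 : ℝ), oddQuot h x y = 2 * sinInt 1 * deriv h x - opA h x := by
  have hker := integrable_kernel h x
  have e : ∀ ξ : ℝ, (∫ y in Ioi (0 : ℝ), Complex.exp (Complex.I * x * ξ) * fourierInt h ξ *
        (2 * Complex.I * (sinKer y ξ : ℂ)))
      = 2 * sinInt 1 * (Complex.exp (Complex.I * x * ξ) * (Complex.I * ξ * fourierInt h ξ))
        - Complex.exp (Complex.I * x * ξ) * symbA ξ * fourierInt h ξ := by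
    intro ξ
    rw [integral_const_mul, integral_const_mul, integral_complex_ofReal]
    change _ * (_ * (sinInt ξ : ℂ)) = _
    rw [sinInt_eq ξ, symbA]
    push_cast; ring
  have i1 := (integrable_exp_mul_deriv h x).const_mul (2 * (sinInt 1 : ℂ))
  -- Integrability of `m ĥ` comes from that of the integrated kernel and of `ξ ĥ`.
  have i2 : Integrable fun ξ : ℝ =>
      Complex.exp (Complex.I * x * ξ) * symbA ξ * fourierInt h ξ := by
    have := i1.sub hker.integral_prod_right
    refine this.congr (Filter.Eventually.of_forall fun ξ => ?_)
    simp only [Pi.sub_apply, Function.uncurry, e]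
    ring
  simp_rw [oddQuot_eq]
  rw [integral_const_mul, integral_integral_swap hker]
  simp_rw [e]
  rw [integral_sub i1 i2, integral_const_mul, deriv_inversion, opA]
  push_cast
  ring

/-! ### The bilinear form `Ω` -/

lemma exists_bound (f : 𝓢(ℝ, ℝ)) (x : ℝ) :
    ∃ C, 0 ≤ C ∧ ∀ y, |f (x + y) - f x| ≤ C * |y| ∧ |f (x + y) - f x| ≤ C := by
  have hb := SchwartzMap.norm_le_seminorm ℝ f
  have hb' := SchwartzMap.norm_le_seminorm ℝ (derivCLM ℝ ℝ f)
  set M := SchwartzMap.seminorm ℝ 0 0 f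
  set N := SchwartzMap.seminorm ℝ 0 0 (derivCLM ℝ ℝ f)
  have hM : 0 ≤ M := (norm_nonneg _).trans (hb 0)
  have hN : 0 ≤ N := (norm_nonneg _).trans (hb' 0)
  refine ⟨2 * M + N, by positivity, fun y => ⟨?_, ?_⟩⟩
  · have := Convex.norm_image_sub_le_of_norm_deriv_le (𝕜 := ℝ) (f := f) (s := univ) (x := x)
      (y := x + y) (C := N) (fun z _ => f.differentiable z)
      (fun z _ => by simpa using hb' z) convex_univ trivial trivial
    simp only [Real.norm_eq_abs, add_sub_cancel_left] at this
    nlinarith [abs_nonneg y, mul_nonneg hM (abs_nonneg y)]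
  · have h1 := hb (x + y)
    have h2 := hb x
    rw [Real.norm_eq_abs] at h1 h2
    have := abs_sub (f (x + y)) (f x)
    linarith

lemma integrable_omega (f g : 𝓢(ℝ, ℝ)) (x : ℝ) :
    Integrable (fun y : ℝ => ((f (x + y) - f x) / y) * ((g (x + y) - g x) / |y|)) := by
  obtain ⟨C, hC, hf⟩ := exists_bound f x
  obtain ⟨D, hD, hg⟩ := exists_bound g x
  refine (integrable_inv_one_add_sq.const_mul (2 * (C * D))).mono' ?_
    (Filter.Eventually.of_forall fun y => ?_)
  · have h1 := f.continuous.measurable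
    have h2 := g.continuous.measurable
    apply Measurable.aestronglyMeasurable
    fun_prop
  · rcases eq_or_ne y 0 with rfl | hy
    · simp; positivity
    have hy1 : 0 < |y| := abs_pos.2 hy
    have hy2 : 0 < y ^ 2 := by positivity
    rw [Real.norm_eq_abs, abs_mul, abs_div, abs_div, abs_abs, div_mul_div_comm, abs_mul_abs_self,
      ← sq, ← div_eq_mul_inv, div_le_div_iff₀ hy2 (by positivity)]
    have h1 : |f (x + y) - f x| * |g (x + y) - g x| ≤ C * |y| * (D * |y|) :=
      mul_le_mul (hf y).1 (hg y).1 (abs_nonneg _) (by positivity)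
    have h2 : |f (x + y) - f x| * |g (x + y) - g x| ≤ C * D :=
      mul_le_mul (hf y).2 (hg y).2 (abs_nonneg _) (by positivity)
    rw [show C * |y| * (D * |y|) = C * D * (|y| * |y|) by ring, abs_mul_abs_self] at h1
    nlinarith

/-- Null-structure identity: `Ω(f,g)(x) = (Af)(x) g(x) + f(x) (Ag)(x) − A(fg)(x)`
for real-valued Schwartz functions, with absolute convergence of the integral
defining `Ω(f,g)(x) = ∫ δ^y f(x) · |δ|^y g(x) dy`. -/
theorem sqg_null_structure (f g : SchwartzMap ℝ ℝ) (x : ℝ) :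
    Integrable (fun y : ℝ => ((f (x + y) - f x) / y) * ((g (x + y) - g x) / |y|)) volume ∧
    ((∫ y : ℝ, ((f (x + y) - f x) / y) * ((g (x + y) - g x) / |y|) : ℝ) : ℂ)
      = opA (fun t => (f t : ℂ)) x * (g x : ℂ) + (f x : ℂ) * opA (fun t => (g t : ℂ)) x
        - opA (fun t => ((f t * g t : ℝ) : ℂ)) x := by
  have hΩ := integrable_omega f g x
  refine ⟨hΩ, ?_⟩
  obtain ⟨F, hF⟩ : ∃ F : 𝓢(ℝ, ℂ), ⇑F = fun t => (f t : ℂ) :=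
    ⟨f.postcompCLM Complex.ofRealCLM, by ext; simp⟩
  obtain ⟨G, hG⟩ : ∃ G : 𝓢(ℝ, ℂ), ⇑G = fun t => (g t : ℂ) :=
    ⟨g.postcompCLM Complex.ofRealCLM, by ext; simp⟩
  obtain ⟨P, hP⟩ : ∃ P : 𝓢(ℝ, ℂ), ⇑P = fun t => ((f t * g t : ℝ) : ℂ) :=
    ⟨pairing (ContinuousLinearMap.mul ℂ ℂ) F G, by ext; simp [hF, hG]⟩
  have hderiv : deriv P x = deriv F x * G x + F x * deriv G x := by
    have : ⇑P = ⇑F * ⇑G := by rw [hP, hF, hG]; ext; simp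
    rw [this, deriv_mul F.differentiableAt G.differentiableAt]
  have key : ∀ y ∈ Ioi (0 : ℝ),
      (((f (x + y) - f x) / y * ((g (x + y) - g x) / |y|)
        + (f (x + -y) - f x) / -y * ((g (x + -y) - g x) / |-y|) : ℝ) : ℂ)
      = oddQuot P x y - G x * oddQuot F x y - F x * oddQuot G x y := by
    intro y hy
    have hy : 0 < y := hy
    have hyc : (y : ℂ) ≠ 0 := Complex.ofReal_ne_zero.2 hy.ne'
    simp only [oddQuot, hderiv]
    rw [abs_neg, abs_of_pos hy, hP, hF, hG]
    push_cast [← sub_eq_add_neg]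
    field_simp
    ring
  have iP := integrableOn_oddQuot P x
  have iF := (integrableOn_oddQuot F x).const_mul (G x)
  have iG := (integrableOn_oddQuot G x).const_mul (F x)
  have hneg : IntegrableOn (fun y : ℝ => (f (x + -y) - f x) / -y * ((g (x + -y) - g x) / |-y|))
      (Ioi 0) := hΩ.comp_neg.integrableOn
  rw [← intervalIntegral.integral_Iic_add_Ioi (b := 0) hΩ.integrableOn hΩ.integrableOn, add_comm,
    ← neg_zero, ← integral_comp_neg_Ioi, neg_zero, ← integral_add hΩ.integrableOn hneg,
    ← integral_complex_ofReal, setIntegral_congr_fun measurableSet_Ioi key,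
    integral_sub (integrable_fun_sub iP iF) iG, integral_sub iP iF, integral_const_mul, integral_const_mul,
    integral_oddQuot, integral_oddQuot, integral_oddQuot, hderiv]
  rw [← hF, ← hG, ← hP, show ((f x : ℝ) : ℂ) = F x by rw [hF], show ((g x : ℝ) : ℂ) = G x by rw [hG]]
  ring
end

section
/- Let n ≥ 2, let p₁,…,pₙ, r ∈ [1,∞] satisfy Σᵢ 1/pᵢ = 1/r, and let α₁,…,αₙ, β₁,…,βₙ ∈ [0,1] satisfy n−1 < Σᵢ αᵢ ≤ n and 0 ≤ Σᵢ βᵢ < n−1. Suppose f₁,…,fₙ : ℝ → ℝ are measurable functions and A₁,…,Aₙ, B₁,…,Bₙ ≥ 0 are constants such that for every y ≠ 0 and every i, ‖fᵢ(·+y) − fᵢ(·)‖_{L^{pᵢ}(ℝ)} ≤ Aᵢ |y|^{αᵢ} and ‖fᵢ(·+y) − fᵢ(·)‖_{L^{pᵢ}(ℝ)} ≤ Bᵢ |y|^{βᵢ}. Then there is a constant C, depending only on n, Σᵢ αᵢ and Σᵢ βᵢ, such that ‖ x ↦ ∫_ℝ ∏ᵢ δ^y fᵢ(x) dy ‖_{L^r(ℝ)}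 ≤ C (∏ᵢ Aᵢ + ∏ᵢ Bᵢ). -/
open MeasureTheory
open scoped ENNReal

/-!
For fixed `y ≠ 0`, Hölder's inequality (`eLpNorm_prod_le`) applied to each of the two hypotheses
bounds the `L^r` norm of `x ↦ ∏ᵢ δ^y fᵢ(x)` by `(∏ Aᵢ) |y|^(Sα - n)` and by
`(∏ Bᵢ) |y|^(Sβ - n)`. The first exponent exceeds `-1` and the second is below `-1`, so using the
first bound for `|y| ≤ 1` and the second for `|y| > 1` gives a majorant integrable in `y`
(`integrable_kernel`). Minkowski's integral inequality (`eLpNorm_integral_le_lintegral`) then moves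
the `L^r` norm inside the integral over `y`.
-/

/-- **Minkowski's integral inequality**, in terms of an a.e. positive majorant `w` of
`y ↦ ‖F(·, y)‖_{L^r}`. For `r < ∞`, Jensen's inequality for the measure `w dy` gives, with
`W = ∫ w`, `(∫ |F(x, y)| dy)^r ≤ W^(r-1) ∫ |F(x, y)|^r w(y)^(1-r) dy`, and integrating in `x` by
Tonelli gives `W^r`. The weight `w` is what makes the argument work without knowing beforehand
that the left-hand side is finite. -/
theorem eLpNorm_integral_le_lintegral {F : ℝ → ℝ → ℝ} (hF : Measurable (Function.uncurry F))
    {w : ℝ → ℝ≥0∞} (hw : Measurable w) (hw0 : ∀ᵐ y, w y ≠ 0) (hwt : ∀ y, w y ≠ ⊤)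
    {r : ℝ≥0∞} (hr : 1 ≤ r) (h : ∀ᵐ y, eLpNorm (fun x => F x y) r volume ≤ w y) :
    eLpNorm (fun x => ∫ y, F x y) r volume ≤ ∫⁻ y, w y := by
  have hG : ∀ x, ‖∫ y, F x y‖ₑ ≤ ∫⁻ y, ‖F x y‖ₑ := fun x => enorm_integral_le_lintegral_enorm _
  have hFe : Measurable (fun z : ℝ × ℝ => ‖F z.1 z.2‖ₑ) := hF.enorm
  rcases eq_or_ne r ⊤ with rfl | hrt
  · rw [eLpNorm_exponent_top]
    have h1 : ∀ᵐ y, ∀ᵐ x, ‖F x y‖ₑ ≤ w y := by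
      filter_upwards [h] with y hy
      rw [eLpNorm_exponent_top] at hy
      filter_upwards [ae_le_eLpNormEssSup (f := fun x => F x y) (μ := volume)] with x hx
      exact hx.trans hy
    have h2 : ∀ᵐ x, ∀ᵐ y, ‖F x y‖ₑ ≤ w y := by
      refine (Measure.ae_ae_comm ?_).2 h1
      exact measurableSet_le hFe (hw.comp measurable_snd)
    refine eLpNormEssSup_le_of_ae_enorm_bound ?_
    filter_upwards [h2] with x hx
    exact (hG x).trans (lintegral_mono_ae hx)
  have hr0 : r ≠ 0 := (zero_lt_one.trans_le hr).ne'
  set s := r.toReal with hs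
  have hs1 : 1 ≤ s := by
    rw [hs, ← ENNReal.toReal_one]; exact ENNReal.toReal_mono hrt hr
  have hs0 : 0 < s := by linarith
  set W := ∫⁻ y, w y with hW
  -- Jensen's inequality for the measure `w dy`, written as Hölder's inequality.
  have hJ : ∀ x, (∫⁻ y, ‖F x y‖ₑ) ^ s
      ≤ W ^ (s - 1) * ∫⁻ y, ‖F x y‖ₑ ^ s * w y ^ (1 - s) := by
    intro x
    have hm : Measurable (fun y => ‖F x y‖ₑ) := hFe.comp (measurable_const.prodMk measurable_id)
    have e : ∫⁻ y, ‖F x y‖ₑ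
        = ∫⁻ y, (‖F x y‖ₑ ^ s * w y ^ (1 - s)) ^ (1 / s) * w y ^ (1 - 1 / s) := by
      refine lintegral_congr_ae ?_
      filter_upwards [hw0] with y hy
      rw [ENNReal.mul_rpow_of_nonneg _ _ (by positivity), ← ENNReal.rpow_mul, ← ENNReal.rpow_mul,
        mul_assoc, ← ENNReal.rpow_add _ _ hy (hwt y)]
      have e1 : s * (1 / s) = 1 := by field_simp
      have e2 : (1 - s) * (1 / s) + (1 - 1 / s) = 0 := by field_simp; ring
      rw [e1, e2]; simp
    have hH := ENNReal.lintegral_mul_norm_pow_le (μ := volume)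
      (f := fun y => ‖F x y‖ₑ ^ s * w y ^ (1 - s)) (g := w)
      ((hm.pow_const _).mul (hw.pow_const _)).aemeasurable hw.aemeasurable
      (p := 1 / s) (q := 1 - 1 / s) (by positivity)
      (by rw [sub_nonneg, div_le_one hs0]; exact hs1) (by ring)
    rw [← e] at hH
    refine (ENNReal.rpow_le_rpow hH hs0.le).trans_eq ?_
    rw [ENNReal.mul_rpow_of_nonneg _ _ hs0.le, ← ENNReal.rpow_mul, ← ENNReal.rpow_mul, mul_comm]
    congr 2
    · field_simp
    · rw [one_div, inv_mul_cancel₀ hs0.ne', ENNReal.rpow_one]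
  have hK : ∀ᵐ y, ∫⁻ x, ‖F x y‖ₑ ^ s * w y ^ (1 - s) ≤ w y := by
    filter_upwards [h, hw0] with y hy hy0
    have hm : Measurable (fun x => ‖F x y‖ₑ) := hFe.comp (measurable_id.prodMk measurable_const)
    rw [lintegral_mul_const _ (hm.pow_const _)]
    have : ∫⁻ x, ‖F x y‖ₑ ^ s ≤ w y ^ s := by
      rw [eLpNorm_eq_lintegral_rpow_enorm_toReal hr0 hrt] at hy
      have := ENNReal.rpow_le_rpow hy hs0.le
      rwa [← ENNReal.rpow_mul, one_div, inv_mul_cancel₀ hs0.ne', ENNReal.rpow_one] at this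
    calc _ ≤ w y ^ s * w y ^ (1 - s) := by gcongr
      _ = w y := by rw [← ENNReal.rpow_add _ _ hy0 (hwt y)]; simp
  have hmain : ∫⁻ x, ‖∫ y, F x y‖ₑ ^ s ≤ W ^ s := by
    have hm2 : Measurable (fun z : ℝ × ℝ => ‖F z.1 z.2‖ₑ ^ s * w z.2 ^ (1 - s)) :=
      (hFe.pow_const _).mul ((hw.comp measurable_snd).pow_const _)
    calc ∫⁻ x, ‖∫ y, F x y‖ₑ ^ s
        ≤ ∫⁻ x, W ^ (s - 1) * ∫⁻ y, ‖F x y‖ₑ ^ s * w y ^ (1 - s) :=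
          lintegral_mono fun x => (ENNReal.rpow_le_rpow (hG x) hs0.le).trans (hJ x)
      _ = W ^ (s - 1) * ∫⁻ x, ∫⁻ y, ‖F x y‖ₑ ^ s * w y ^ (1 - s) :=
          lintegral_const_mul _ hm2.lintegral_prod_right'
      _ = W ^ (s - 1) * ∫⁻ y, ∫⁻ x, ‖F x y‖ₑ ^ s * w y ^ (1 - s) := by
          rw [lintegral_lintegral_swap hm2.aemeasurable]
      _ ≤ W ^ (s - 1) * W := mul_le_mul_right (lintegral_mono_ae hK) _
      _ = W ^ s := by
          nth_rw 2 [← ENNReal.rpow_one W]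
          rw [← ENNReal.rpow_add_of_nonneg _ _ (by linarith) zero_le_one]; simp
  rw [eLpNorm_eq_lintegral_rpow_enorm_toReal hr0 hrt]
  refine (ENNReal.rpow_le_rpow hmain (by positivity)).trans_eq ?_
  rw [← ENNReal.rpow_mul, mul_one_div_cancel hs0.ne', ENNReal.rpow_one]

/-- **Hölder's inequality** for finite products. -/
theorem eLpNorm_prod_le {ι : Type*} (t : Finset ι) (g : ι → ℝ → ℝ) (hg : ∀ i, Measurable (g i))
    (p : ι → ℝ≥0∞) :
    eLpNorm (fun x => ∏ i ∈ t, g i x) (∑ i ∈ t, (p i)⁻¹)⁻¹ volume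
      ≤ ∏ i ∈ t, eLpNorm (g i) (p i) volume := by
  classical
  induction t using Finset.induction_on with
  | empty => simpa using (eLpNormEssSup_le_of_ae_enorm_bound (μ := (volume : Measure ℝ))
      (f := fun _ => (1 : ℝ)) (C := 1) (by simp))
  | insert i t hi ih =>
    simp only [Finset.prod_insert hi, Finset.sum_insert hi]
    have : ENNReal.HolderTriple (p i) (∑ i ∈ t, (p i)⁻¹)⁻¹ ((p i)⁻¹ + ∑ i ∈ t, (p i)⁻¹)⁻¹ :=
      ⟨by simp⟩
    refine (eLpNorm_smul_le_mul_eLpNorm (𝕜 := ℝ) (p := p i)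
      (q := (∑ i ∈ t, (p i)⁻¹)⁻¹) (φ := g i) (f := fun x => ∏ i ∈ t, g i x)
      (Finset.measurable_prod t fun j _ => hg j).aestronglyMeasurable
      (hg i).aestronglyMeasurable).trans ?_
    gcongr

/-- The radial kernel `|y|^a` near the origin and `|y|^b` away from it. -/
noncomputable def kernel (a b y : ℝ) : ℝ := if |y| ≤ 1 then |y| ^ a else |y| ^ b

theorem measurable_kernel (a b : ℝ) : Measurable (kernel a b) :=
  Measurable.ite (measurableSet_le continuous_abs.measurable measurable_const)
    (continuous_abs.measurable.pow_const _) (continuous_abs.measurable.pow_const _)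

theorem kernel_pos (a b : ℝ) {y : ℝ} (hy : y ≠ 0) : 0 < kernel a b y := by
  have := abs_pos.2 hy
  unfold kernel; split_ifs <;> positivity

theorem integrable_kernel_s4 {a b : ℝ} (ha : -1 < a) (hb : b < -1) : Integrable (kernel a b) := by
  have h1 : IntegrableOn (kernel a b) (Set.Ioc 0 1) := by
    have := (intervalIntegrable_iff_integrableOn_Ioc_of_le zero_le_one).1
      (intervalIntegral.intervalIntegrable_rpow' (a := 0) (b := 1) ha)
    refine this.congr_fun (fun y hy => ?_) measurableSet_Ioc
    simp [kernel, abs_of_pos hy.1, hy.2]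
  have h2 : IntegrableOn (kernel a b) (Set.Ioi 1) := by
    refine (integrableOn_Ioi_rpow_of_lt hb zero_lt_one).congr_fun (fun y hy => ?_) measurableSet_Ioi
    have hy' : 1 < y := hy
    simp [kernel, abs_of_pos (zero_lt_one.trans hy'), not_le.2 hy']
  have h3 : IntegrableOn (kernel a b) (Set.Ioi 0) := by
    rw [← Set.Ioc_union_Ioi_eq_Ioi zero_le_one]; exact h1.union h2
  have h4 : IntegrableOn (kernel a b) (Set.Iic 0) := by
    have e : (fun y => kernel a b (-y)) = kernel a b := by ext y; simp [kernel]
    rw [integrableOn_Iic_iff_integrableOn_Iio, ← e]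
    have := h3.comp_neg
    simpa using this
  rw [← integrableOn_univ, ← Set.Iic_union_Ioi (a := (0 : ℝ))]
  exact h4.union h3

/-- Multilinear difference-quotient estimate: if `‖fᵢ(·+y) − fᵢ‖_{L^{pᵢ}} ≤ Aᵢ|y|^{αᵢ}` and
`≤ Bᵢ|y|^{βᵢ}` with `Σ 1/pᵢ = 1/r`, `n−1 < Σαᵢ ≤ n`, `0 ≤ Σβᵢ < n−1`, then
`‖∫ ∏ δ^y fᵢ dy‖_{L^r} ≤ C(∏Aᵢ + ∏Bᵢ)`, with `C` depending only on `n`, `Σαᵢ`, `Σβᵢ`. -/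
theorem multilinear_difference_quotient_estimate
    (n : ℕ) (hn : 2 ≤ n) (Sα Sβ : ℝ)
    (hSα₁ : (n : ℝ) - 1 < Sα) (hSα₂ : Sα ≤ (n : ℝ))
    (hSβ₁ : 0 ≤ Sβ) (hSβ₂ : Sβ < (n : ℝ) - 1) :
    ∃ C : ℝ, 0 < C ∧
      ∀ (p : Fin n → ℝ≥0∞) (r : ℝ≥0∞) (α β : Fin n → ℝ) (f : Fin n → ℝ → ℝ)
        (A B : Fin n → ℝ),
        (∀ i, 1 ≤ p i) → 1 ≤ r → (∑ i, (p i)⁻¹) = r⁻¹ →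
        (∀ i, α i ∈ Set.Icc (0 : ℝ) 1) → (∀ i, β i ∈ Set.Icc (0 : ℝ) 1) →
        (∑ i, α i) = Sα → (∑ i, β i) = Sβ →
        (∀ i, Measurable (f i)) →
        (∀ i, 0 ≤ A i) → (∀ i, 0 ≤ B i) →
        (∀ y : ℝ, y ≠ 0 → ∀ i,
          eLpNorm (fun x => f i (x + y) - f i x) (p i) volume
            ≤ ENNReal.ofReal (A i * |y| ^ (α i))) →
        (∀ y : ℝ, y ≠ 0 → ∀ i,
          eLpNorm (fun x => f i (x + y) - f i x) (p i) volume
            ≤ ENNReal.ofReal (B i * |y| ^ (β i))) →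
        eLpNorm (fun x => ∫ y : ℝ, ∏ i, ((f i (x + y) - f i x) / y)) r volume
          ≤ ENNReal.ofReal (C * (∏ i, A i + ∏ i, B i)) := by
  set k := kernel (Sα - n) (Sβ - n) with hk
  have hkint : Integrable k := integrable_kernel_s4 (by linarith) (by linarith)
  have hk0 : ∀ y, 0 ≤ k y := fun y => by
    rw [hk]; unfold kernel; split_ifs <;> positivity
  have hI : 0 ≤ ∫ y, k y := integral_nonneg hk0
  -- Adding `1` gives `0 < C` at once.
  refine ⟨(∫ y, k y) + 1, by linarith, ?_⟩
  intro p r α β f A B _ hr hpr _ _ hα hβ hf hA hB hfA hfB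
  set P := ∏ i, A i + ∏ i, B i with hP
  have hPA : 0 ≤ ∏ i, A i := Finset.prod_nonneg fun i _ => hA i
  have hPB : 0 ≤ ∏ i, B i := Finset.prod_nonneg fun i _ => hB i
  -- Hölder's inequality at a fixed increment `y`.
  have hHolder : ∀ (y : ℝ), y ≠ 0 → ∀ (γ D : Fin n → ℝ), (∀ i, 0 ≤ D i) →
      (∀ i, eLpNorm (fun x => f i (x + y) - f i x) (p i) volume
        ≤ ENNReal.ofReal (D i * |y| ^ (γ i))) →
      eLpNorm (fun x => ∏ i, ((f i (x + y) - f i x) / y)) r volume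
        ≤ ENNReal.ofReal ((∏ i, D i) * |y| ^ ((∑ i, γ i) - n)) := by
    intro y hy γ D hD h
    have hy' := abs_pos.2 hy
    have e := eLpNorm_prod_le Finset.univ (fun i x => (f i (x + y) - f i x) / y)
      (fun i => (((hf i).comp (measurable_add_const y)).sub (hf i)).div_const y) p
    rw [hpr, inv_inv] at e
    refine e.trans ?_
    calc ∏ i, eLpNorm (fun x => (f i (x + y) - f i x) / y) (p i) volume
        ≤ ∏ i, ENNReal.ofReal (D i * |y| ^ (γ i) * |y|⁻¹) := by
          refine Finset.prod_le_prod' fun i _ => ?_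
          have e2 : (fun x => (f i (x + y) - f i x) / y)
              = y⁻¹ • (fun x => f i (x + y) - f i x) := by
            ext x; simp [div_eq_inv_mul]
          rw [e2, eLpNorm_const_smul, mul_comm, ENNReal.ofReal_mul
            (mul_nonneg (hD i) (by positivity)), ← abs_inv, ← Real.enorm_eq_ofReal_abs]
          gcongr
          exact h i
      _ = ENNReal.ofReal ((∏ i, D i) * |y| ^ ((∑ i, γ i) - n)) := by
          rw [← ENNReal.ofReal_prod_of_nonneg
            fun i _ => mul_nonneg (mul_nonneg (hD i) (by positivity)) (by positivity)]
          rw [Finset.prod_mul_distrib, Finset.prod_mul_distrib, Real.rpow_sub hy',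
            Real.rpow_sum_of_pos hy', Real.rpow_natCast]
          simp [div_eq_mul_inv, mul_assoc]
  have hFm : Measurable (Function.uncurry fun x y : ℝ => ∏ i, ((f i (x + y) - f i x) / y)) := by
    refine Finset.measurable_prod _ fun i _ => ?_
    exact (((hf i).comp (measurable_fst.add measurable_snd)).sub
      ((hf i).comp measurable_fst)).div measurable_snd
  have hne : ∀ᵐ y : ℝ, y ≠ 0 := by simp [ae_iff]
  -- The majorant in Minkowski's inequality has to be positive, hence the `ε`.
  have hε : ∀ ε : ℝ, 0 < ε →
      eLpNorm (fun x => ∫ y : ℝ, ∏ i, ((f i (x + y) - f i x) / y)) r volume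
        ≤ ENNReal.ofReal ((∫ y, k y) * (P + ε)) := by
    intro ε hε
    have hPε : 0 < P + ε := by positivity
    have hM := eLpNorm_integral_le_lintegral hFm (w := fun y => ENNReal.ofReal (k y * (P + ε)))
      ((measurable_kernel _ _).mul_const _).ennreal_ofReal ?_ (fun _ => ENNReal.ofReal_ne_top)
      hr ?_
    · rwa [← ofReal_integral_eq_lintegral_ofReal (hkint.mul_const _)
        (.of_forall fun y => mul_nonneg (hk0 y) hPε.le), integral_mul_const] at hM
    · filter_upwards [hne] with y hy
      exact (ENNReal.ofReal_pos.2 (mul_pos (kernel_pos _ _ hy) hPε)).ne'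
    · filter_upwards [hne] with y hy
      have hy' := abs_pos.2 hy
      by_cases hy1 : |y| ≤ 1
      · refine (hHolder y hy α A hA (hfA y hy)).trans (ENNReal.ofReal_le_ofReal ?_)
        have : k y = |y| ^ (Sα - n) := by simp [hk, kernel, hy1]
        rw [this, hα, mul_comm]
        gcongr
        linarith
      · refine (hHolder y hy β B hB (hfB y hy)).trans (ENNReal.ofReal_le_ofReal ?_)
        have : k y = |y| ^ (Sβ - n) := by simp [hk, kernel, hy1]
        rw [this, hβ, mul_comm]
        gcongr
        linarith
  have hlim : Filter.Tendsto (fun ε : ℝ => ENNReal.ofReal ((∫ y, k y) * (P + ε)))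
      (nhdsWithin 0 (Set.Ioi 0)) (nhds (ENNReal.ofReal ((∫ y, k y) * (P + 0)))) :=
    (ENNReal.continuous_ofReal.comp (by fun_prop)).continuousAt.tendsto.mono_left
      nhdsWithin_le_nhds
  refine (ge_of_tendsto hlim (Filter.eventually_of_mem self_mem_nhdsWithin hε)).trans ?_
  refine ENNReal.ofReal_le_ofReal ?_
  rw [add_zero]
  have : 0 ≤ P := by positivity
  nlinarith
end

section
/- Let f, g : ℝ → ℝ be bounded Lipschitz functions, with |f(u) − f(v)| ≤ L_f|u − v|, |g(u) − g(v)| ≤ L_g|u − v|, |f| ≤ M_f and |g| ≤ M_g. Then for every x ∈ ℝ the function y ↦ F(δ^y f(x)) · |δ|^y g(x) is Lebesgue integrable on ℝ, with ∫_ℝ |F(δ^y f(x)) · |δ|^y g(x)| dy ≤ L_f² L_g + 4 M_f² M_g. In particular the SQG front nonlinearity Q(f,g)(x) is well-defined for bounded Lipschitz inputs. -/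
/-!
Since `0 ≤ F(s) ≤ s²/2`, the integrand is at most `(δ^y f)²/2 · |δ^y g|` in absolute value.
For `|y| ≤ 1` the Lipschitz bounds give `L_f² L_g / 2`; for `|y| > 1` the sup bounds
`|f(x+y) - f(x)| ≤ 2 M_f`, `|g(x+y) - g(x)| ≤ 2 M_g` give `4 M_f² M_g / |y|³`. The resulting even
majorant (`sqgMajorant`) has integral exactly `L_f² L_g + 4 M_f² M_g`.
-/

open MeasureTheory

/-- `F(s) = 1 − 1/√(1+s²)`. -/
noncomputable def Fq (s : ℝ) : ℝ := 1 - 1 / Real.sqrt (1 + s ^ 2)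

lemma Fq_nonneg (s : ℝ) : 0 ≤ Fq s := by
  have h1 : 1 ≤ Real.sqrt (1 + s ^ 2) := Real.one_le_sqrt.2 (by nlinarith [sq_nonneg s])
  have := (div_le_one (by linarith)).2 h1
  unfold Fq
  linarith

lemma Fq_le_half_sq (s : ℝ) : Fq s ≤ s ^ 2 / 2 := by
  have h1 : 1 ≤ Real.sqrt (1 + s ^ 2) := Real.one_le_sqrt.2 (by nlinarith [sq_nonneg s])
  have h2 : Real.sqrt (1 + s ^ 2) ^ 2 = 1 + s ^ 2 := Real.sq_sqrt (by positivity)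
  unfold Fq
  generalize Real.sqrt (1 + s ^ 2) = r at h1 h2
  -- With `r = √(1 + s²) ≥ 1`: `1 - 1/r ≤ r - 1 ≤ (r² - 1)/2`.
  have h3 : 2 - r ≤ 1 / r := by
    rw [le_div_iff₀ (by linarith)]
    nlinarith [sq_nonneg (r - 1)]
  nlinarith [sq_nonneg (r - 1)]

lemma measurable_Fq : Measurable Fq := by
  unfold Fq
  fun_prop

/-- The radial profile of the majorant: the constant `A` for `t ≤ 1` and `B / t³` for `t > 1`. -/
noncomputable def sqgMajorant (A B t : ℝ) : ℝ := if t ≤ 1 then A else B * t ^ (-3 : ℝ)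

lemma integrableOn_sqgMajorant_Ioc (A B : ℝ) :
    IntegrableOn (sqgMajorant A B) (Set.Ioc 0 1) := by
  have h : IntegrableOn (fun _ : ℝ => A) (Set.Ioc 0 1) := integrableOn_const (by simp)
  exact h.congr_fun (fun t ht => by simp [sqgMajorant, ht.2]) measurableSet_Ioc

lemma integrableOn_sqgMajorant_Ioi_one (A B : ℝ) :
    IntegrableOn (sqgMajorant A B) (Set.Ioi 1) := by
  have h : IntegrableOn (fun t : ℝ => B * t ^ (-3 : ℝ)) (Set.Ioi 1) :=
    (integrableOn_Ioi_rpow_of_lt (by norm_num) one_pos).const_mul B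
  exact h.congr_fun (fun t ht => by simp [sqgMajorant, not_le.2 (Set.mem_Ioi.1 ht)])
    measurableSet_Ioi

lemma integrableOn_sqgMajorant (A B : ℝ) : IntegrableOn (sqgMajorant A B) (Set.Ioi 0) := by
  rw [← Set.Ioc_union_Ioi_eq_Ioi zero_le_one]
  exact (integrableOn_sqgMajorant_Ioc A B).union (integrableOn_sqgMajorant_Ioi_one A B)

lemma setIntegral_sqgMajorant (A B : ℝ) :
    ∫ t in Set.Ioi (0 : ℝ), sqgMajorant A B t = A + B / 2 := by
  rw [← Set.Ioc_union_Ioi_eq_Ioi zero_le_one,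
    setIntegral_union (Set.Ioc_disjoint_Ioi le_rfl) measurableSet_Ioi
      (integrableOn_sqgMajorant_Ioc A B) (integrableOn_sqgMajorant_Ioi_one A B)]
  have h1 : ∫ t in Set.Ioc (0 : ℝ) 1, sqgMajorant A B t = ∫ _ in Set.Ioc (0 : ℝ) 1, A :=
    setIntegral_congr_fun measurableSet_Ioc fun t ht => by simp [sqgMajorant, ht.2]
  have h2 : ∫ t in Set.Ioi (1 : ℝ), sqgMajorant A B t
      = ∫ t in Set.Ioi (1 : ℝ), B * t ^ (-3 : ℝ) :=
    setIntegral_congr_fun measurableSet_Ioi fun t ht => by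
      simp [sqgMajorant, not_le.2 (Set.mem_Ioi.1 ht)]
  rw [h1, h2, integral_const_mul, integral_Ioi_rpow_of_lt (by norm_num) one_pos]
  norm_num
  ring

lemma integrable_sqgMajorant_abs (A B : ℝ) : Integrable (fun y : ℝ => sqgMajorant A B |y|) := by
  have hpos : IntegrableOn (fun y : ℝ => sqgMajorant A B |y|) (Set.Ioi 0) :=
    (integrableOn_sqgMajorant A B).congr_fun
      (fun t ht => by rw [abs_of_pos (Set.mem_Ioi.1 ht)]) measurableSet_Ioi
  have hneg : IntegrableOn (fun y : ℝ => sqgMajorant A B |y|) (Set.Iic 0) := by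
    rw [← Measure.map_neg_eq_self (volume : Measure ℝ)]
    let m : MeasurableEmbedding fun x : ℝ => -x := (Homeomorph.neg ℝ).measurableEmbedding
    rw [m.integrableOn_map_iff]
    simp_rw [Function.comp_def, abs_neg, Set.neg_preimage, Set.neg_Iic, neg_zero]
    exact Iff.mpr integrableOn_Ici_iff_integrableOn_Ioi hpos
  rw [← integrableOn_univ, ← Set.Iic_union_Ioi (a := (0 : ℝ))]
  exact hneg.union hpos

/-- For bounded Lipschitz `f, g` the SQG front nonlinearity
`Q(f,g)(x) = ∫ F(δ^y f(x)) |δ|^y g(x) dy` is absolutely convergent, with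
`∫ |F(δ^y f(x)) |δ|^y g(x)| dy ≤ L_f² L_g + 4 M_f² M_g`. -/
theorem sqg_Q_well_defined (f g : ℝ → ℝ) (Lf Lg Mf Mg : ℝ)
    (hLf : ∀ u v : ℝ, |f u - f v| ≤ Lf * |u - v|)
    (hLg : ∀ u v : ℝ, |g u - g v| ≤ Lg * |u - v|)
    (hMf : ∀ u : ℝ, |f u| ≤ Mf) (hMg : ∀ u : ℝ, |g u| ≤ Mg) (x : ℝ) :
    Integrable (fun y : ℝ => Fq ((f (x + y) - f x) / y) * ((g (x + y) - g x) / |y|)) volume ∧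
    (∫ y : ℝ, |Fq ((f (x + y) - f x) / y) * ((g (x + y) - g x) / |y|)|)
      ≤ Lf ^ 2 * Lg + 4 * Mf ^ 2 * Mg := by
  set φ : ℝ → ℝ := fun y => Fq ((f (x + y) - f x) / y) * ((g (x + y) - g x) / |y|) with hφ
  set A : ℝ := Lf ^ 2 / 2 * Lg with hA
  set B : ℝ := 4 * Mf ^ 2 * Mg with hB
  have hLg0 : 0 ≤ Lg := by simpa using (abs_nonneg _).trans (hLg 1 0)
  have hLf0 : 0 ≤ Lf := by simpa using (abs_nonneg _).trans (hLf 1 0)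
  have hMg0 : 0 ≤ Mg := (abs_nonneg _).trans (hMg 0)
  have hfc : Continuous f := (LipschitzWith.of_dist_le_mul (K := ⟨Lf, hLf0⟩)
    (fun u v => by rw [Real.dist_eq, Real.dist_eq]; exact hLf u v)).continuous
  have hgc : Continuous g := (LipschitzWith.of_dist_le_mul (K := ⟨Lg, hLg0⟩)
    (fun u v => by rw [Real.dist_eq, Real.dist_eq]; exact hLg u v)).continuous
  have hmeas : Measurable φ := by
    have h1 : Measurable fun y : ℝ => (f (x + y) - f x) / y :=
      ((hfc.comp (continuous_const.add continuous_id)).measurable.sub_const _).div measurable_id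
    have h2 : Measurable fun y : ℝ => (g (x + y) - g x) / |y| :=
      ((hgc.comp (continuous_const.add continuous_id)).measurable.sub_const _).div
        continuous_abs.measurable
    exact (measurable_Fq.comp h1).mul h2
  -- A bound `a` on `|δ^y f|` and `b` on `|δ^y g|` turns into a bound on the integrand.
  have key : ∀ y a b : ℝ, |f (x + y) - f x| / |y| ≤ a → |g (x + y) - g x| / |y| ≤ b →
      |φ y| ≤ a ^ 2 / 2 * b := by
    intro y a b ha hb
    simp only [hφ]
    rw [abs_mul, abs_of_nonneg (Fq_nonneg _), abs_div (g (x + y) - g x), abs_abs]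
    have h1 : Fq ((f (x + y) - f x) / y) ≤ a ^ 2 / 2 := by
      refine (Fq_le_half_sq _).trans ?_
      rw [← sq_abs, abs_div]
      gcongr
    exact mul_le_mul h1 hb (by positivity) (by positivity)
  have hbound : ∀ y, |φ y| ≤ sqgMajorant A B |y| := by
    intro y
    unfold sqgMajorant
    split_ifs with h
    -- At `y = 0` both quotients are `0`, and the Lipschitz bounds hold trivially.
    · refine key y Lf Lg ?_ ?_
      · exact div_le_of_le_mul₀ (abs_nonneg _) hLf0 (by simpa using hLf (x + y) x)
      · exact div_le_of_le_mul₀ (abs_nonneg _) hLg0 (by simpa using hLg (x + y) x)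
    · have hy : 0 < |y| := by linarith
      have hf2 : |f (x + y) - f x| ≤ 2 * Mf :=
        (abs_sub _ _).trans (by linarith [hMf (x + y), hMf x])
      have hg2 : |g (x + y) - g x| ≤ 2 * Mg :=
        (abs_sub _ _).trans (by linarith [hMg (x + y), hMg x])
      refine (key y (2 * Mf / |y|) (2 * Mg / |y|) (by gcongr) (by gcongr)).trans_eq ?_
      rw [Real.rpow_neg hy.le, show (3 : ℝ) = ((3 : ℕ) : ℝ) by norm_num, Real.rpow_natCast, hB]
      field_simp
      ring
  have hmaj := integrable_sqgMajorant_abs A B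
  have hint : Integrable φ := hmaj.mono' hmeas.aestronglyMeasurable (ae_of_all _ hbound)
  refine ⟨hint, (integral_mono hint.abs hmaj hbound).trans_eq ?_⟩
  rw [integral_comp_abs (f := sqgMajorant A B), setIntegral_sqgMajorant, hA]
  ring
end
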